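/- arXiv:1004.1854 — 2 statements merged into one kernel-verified Lean document; each statement's English description precedes it below -/
import Mathlib

section
/- If every reward function of a network contribution game belongs to class C, then every strict pairwise equilibrium — a pairwise equilibrium s in which, for every player v, the strategy s_v is the unique unilateral best response to the other players' strategies s_{−v} — is tight, i.e., every edge e=(u,v) satisfies s_u(e) ∈ {0, B_u} and s_v(e) ∈ {0, B_v}. -/
open Finset

/-- A network contribution game on a finite simple undirected graph. -/
structure NCGame (V : Type) [Fintype V] [DecidableEq V] where
  /-- adjacency relation of the (simple, undirected) graph -/
  Adj : V → V → Prop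
  adj_symm : ∀ u v, Adj u v → Adj v u
  adj_irrefl : ∀ v, ¬ Adj v v
  /-- budget of each player -/
  B : V → ℝ
  B_nonneg : ∀ v, 0 ≤ B v
  /-- reward function of each edge; `f u v x y` is the reward of edge `(u,v)`
  when `u` contributes `x` and `v` contributes `y`. -/
  f : V → V → ℝ → ℝ → ℝ
  f_comm : ∀ u v x y, f u v x y = f v u x y
  f_symm : ∀ u v x y, f u v x y = f u v y x
  f_nonneg : ∀ u v x y, 0 ≤ x → 0 ≤ y → 0 ≤ f u v x y
  f_mono : ∀ u v y, 0 ≤ y → MonotoneOn (fun x => f u v x y) (Set.Ici 0)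

variable {V : Type} [Fintype V] [DecidableEq V]

/-- A state: `s v u` is the effort player `v` puts on the edge `(v,u)`.
It is valid if efforts are nonnegative, supported on edges, and within budget. -/
def validState (g : NCGame V) (s : V → V → ℝ) : Prop :=
  (∀ v u, 0 ≤ s v u) ∧ (∀ v u, ¬ g.Adj v u → s v u = 0) ∧
  (∀ v, ∑ u, s v u ≤ g.B v)

open Classical in
/-- utility of player `v` -/
noncomputable def util (g : NCGame V) (s : V → V → ℝ) (v : V) : ℝ :=
  ∑ u, if g.Adj v u then g.f v u (s v u) (s u v) else 0

/-- social welfare -/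
noncomputable def welfare (g : NCGame V) (s : V → V → ℝ) : ℝ :=
  ∑ v, util g s v

/-- Nash equilibrium: no unilateral improving deviation. -/
def IsNashEq (g : NCGame V) (s : V → V → ℝ) : Prop :=
  validState g s ∧
  ∀ v (t : V → ℝ), validState g (Function.update s v t) →
    util g (Function.update s v t) v ≤ util g s v

/-- Pairwise equilibrium: Nash and no bilateral improving deviation. -/
def IsPairwiseEq (g : NCGame V) (s : V → V → ℝ) : Prop :=
  IsNashEq g s ∧
  ∀ u v (tu tv : V → ℝ), u ≠ v →
    validState g (Function.update (Function.update s u tu) v tv) →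
    ¬(util g s u < util g (Function.update (Function.update s u tu) v tv) u ∧
      util g s v < util g (Function.update (Function.update s u tu) v tv) v)

/-- Strong equilibrium: no coalition has a joint deviation strictly improving
the utility of all its members. -/
def IsStrongEq (g : NCGame V) (s : V → V → ℝ) : Prop :=
  validState g s ∧
  ∀ (C : Finset V) (s' : V → V → ℝ), C.Nonempty → validState g s' →
    (∀ v, v ∉ C → s' v = s v) →
    ∃ v ∈ C, util g s' v ≤ util g s v

/-- class `C`: symmetric, nonnegative, nondecreasing, coordinate-convex. -/
def InClassC (f : ℝ → ℝ → ℝ) : Prop :=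
  (∀ x y, 0 ≤ x → 0 ≤ y → 0 ≤ f x y) ∧
  (∀ x y, f x y = f y x) ∧
  (∀ y, 0 ≤ y → MonotoneOn (fun x => f x y) (Set.Ici 0)) ∧
  (∀ y, 0 ≤ y → ConvexOn ℝ (Set.Ici 0) (fun x => f x y))

/-- class `C₀`: members of `C` vanishing when one argument is `0`. -/
def InClassC0 (f : ℝ → ℝ → ℝ) : Prop :=
  InClassC f ∧ ∀ x, 0 ≤ x → f x 0 = 0

/-- An edge is tight in `s` if both endpoints contribute `0` or their full budget. -/
def tightState (g : NCGame V) (s : V → V → ℝ) : Prop :=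
  ∀ u v, g.Adj u v → s u v = 0 ∨ s u v = g.B u

/-!
Fix the other players' efforts. Player `v`'s utility is then a convex function on the polytope of
its feasible strategies, so a unique best response is an extreme point of that polytope. A strategy
that spends `0 < x i < b` of the budget `b` on edge `i` is not extreme: it mixes spending everything
on `i` with abandoning `i` and scaling up the remaining efforts by `b / (b - x i)`.
-/

theorem convexOn_finset_sum {𝕜 E β ι : Type*} [Semiring 𝕜] [PartialOrder 𝕜] [AddCommMonoid E]
    [AddCommMonoid β] [PartialOrder β] [IsOrderedAddMonoid β] [SMul 𝕜 E] [Module 𝕜 β]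
    {S : Set E} {t : Finset ι} {f : ι → E → β} (hS : Convex 𝕜 S)
    (hf : ∀ i ∈ t, ConvexOn 𝕜 S (f i)) : ConvexOn 𝕜 S (fun x => ∑ i ∈ t, f i x) := by
  rw [← Finset.sum_fn]
  exact Finset.sum_induction f (ConvexOn 𝕜 S) (fun _ _ => ConvexOn.add) (convexOn_const 0 hS) hf

theorem mem_extremePoints_of_convexOn_of_forall_lt {𝕜 E β : Type*} [Semiring 𝕜] [PartialOrder 𝕜]
    [AddCommMonoid E] [AddCommMonoid β] [LinearOrder β] [IsOrderedCancelAddMonoid β]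
    [Module 𝕜 E] [Module 𝕜 β] [PosSMulStrictMono 𝕜 β] {S : Set E} {f : E → β} {x : E}
    (hf : ConvexOn 𝕜 S f) (hx : x ∈ S) (hmax : ∀ y ∈ S, y ≠ x → f y < f x) :
    x ∈ S.extremePoints 𝕜 := by
  refine mem_extremePoints_iff_left.2 ⟨hx, fun y hy z hz hxyz => ?_⟩
  by_contra hyx
  have hlt : f x < f z := hf.lt_right_of_left_lt hy hz hxyz (hmax y hy hyx)
  have hzx : z ≠ x := fun h => hlt.ne (congrArg f h.symm)
  exact hlt.asymm (hmax z hz hzx)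

section BudgetSet

variable {R ι : Type*} [Fintype ι]

/-- The polytope of nonnegative vectors supported on `A` whose coordinates sum to at most `b`: the
ways of spending a budget `b` on the items in `A`. -/
def budgetSet [AddCommMonoid R] [PartialOrder R] (A : Set ι) (b : R) : Set (ι → R) :=
  {x | (∀ i, 0 ≤ x i) ∧ (∀ i ∉ A, x i = 0) ∧ ∑ i, x i ≤ b}

theorem single_mem_budgetSet [AddCommMonoid R] [PartialOrder R] [DecidableEq ι] {A : Set ι} {b : R}
    {i : ι} (hi : i ∈ A) (hb : 0 ≤ b) : Pi.single i b ∈ budgetSet A b := by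
  have hnonneg : (0 : ι → R) ≤ Pi.single i b := Pi.single_nonneg.2 hb
  refine ⟨hnonneg, fun j hj => ?_, ?_⟩
  · exact Pi.single_eq_of_ne (ne_of_mem_of_not_mem hi hj).symm _
  · simp

theorem apply_le_of_mem_budgetSet [AddCommMonoid R] [PartialOrder R] [IsOrderedAddMonoid R]
    {A : Set ι} {b : R} {x : ι → R} (hx : x ∈ budgetSet A b) (i : ι) : x i ≤ b :=
  (Finset.single_le_sum (fun j _ => hx.1 j) (Finset.mem_univ i)).trans hx.2.2

theorem convex_budgetSet [Semiring R] [PartialOrder R] [IsOrderedRing R] (A : Set ι) (b : R) :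
    Convex R (budgetSet A b) := by
  rintro x ⟨hx_nonneg, hx_supp, hx_sum⟩ y ⟨hy_nonneg, hy_supp, hy_sum⟩ p q hp hq hpq
  refine ⟨fun i => ?_, fun i hi => ?_, ?_⟩
  · exact add_nonneg (mul_nonneg hp (hx_nonneg i)) (mul_nonneg hq (hy_nonneg i))
  · simp [hx_supp i hi, hy_supp i hi]
  · calc ∑ i, (p • x + q • y) i = p * ∑ i, x i + q * ∑ i, y i := by
          simp [Finset.sum_add_distrib, Finset.mul_sum]
      _ ≤ p * b + q * b := by gcongr
      _ = b := by rw [← add_mul, hpq, one_mul]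

end BudgetSet

section ExtremePoints

variable {𝕜 ι : Type*} [Field 𝕜] [LinearOrder 𝕜] [IsStrictOrderedRing 𝕜]
  {A : Set ι} {b : 𝕜} {x : ι → 𝕜} {i : ι}

theorem mem_openSegment_single_smul_update_zero [DecidableEq ι]
    (hpos : 0 < x i) (hxb : x i < b) :
    x ∈ openSegment 𝕜 (Pi.single i b) ((b / (b - x i)) • Function.update x i 0) := by
  have hb : 0 < b := hpos.trans hxb
  have hgap : 0 < b - x i := sub_pos.2 hxb
  refine ⟨x i / b, (b - x i) / b, div_pos hpos hb, div_pos hgap hb, ?_, funext fun j => ?_⟩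
  · rw [← add_div, add_sub_cancel, div_self hb.ne']
  · by_cases hji : j = i
    · subst hji
      simp [hb.ne']
    · have hcancel : (b - x i) / b * (b / (b - x i) * x j) = x j := by field_simp
      simpa [hji] using hcancel

variable [Fintype ι]

theorem smul_update_zero_mem_budgetSet [DecidableEq ι] (hx : x ∈ budgetSet A b)
    (hxb : x i < b) : (b / (b - x i)) • Function.update x i 0 ∈ budgetSet A b := by
  obtain ⟨hx_nonneg, hx_supp, hx_sum⟩ := hx
  have hb : 0 ≤ b := (hx_nonneg i).trans hxb.le
  have hgap : 0 < b - x i := sub_pos.2 hxb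
  have hscale : 0 ≤ b / (b - x i) := div_nonneg hb hgap.le
  refine ⟨fun j => mul_nonneg hscale ?_, fun j hj => ?_, ?_⟩
  · exact (le_update_iff (x := 0)).2 ⟨le_rfl, fun k _ => hx_nonneg k⟩ j
  · by_cases hji : j = i <;> simp [hji, hx_supp j hj]
  · have hsum : ∑ j, Function.update x i 0 j = ∑ j, x j - x i := by
      rw [Finset.sum_update_of_mem (Finset.mem_univ i), zero_add, Finset.sdiff_singleton_eq_erase,
        Finset.sum_erase_eq_sub (Finset.mem_univ i)]
    calc ∑ j, ((b / (b - x i)) • Function.update x i 0) j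
        = b / (b - x i) * (∑ j, x j - x i) := by
          simp only [Pi.smul_apply, smul_eq_mul, ← Finset.mul_sum, hsum]
      _ ≤ b / (b - x i) * (b - x i) := by gcongr
      _ = b := div_mul_cancel₀ b hgap.ne'

theorem eq_zero_or_eq_of_mem_extremePoints_budgetSet
    (hx : x ∈ (budgetSet A b).extremePoints 𝕜) (i : ι) : x i = 0 ∨ x i = b := by
  classical
  have hxS : x ∈ budgetSet A b := hx.1
  by_contra! ⟨hx_zero, hx_budget⟩
  have hpos : 0 < x i := (hxS.1 i).lt_of_ne' hx_zero
  have hxb : x i < b := (apply_le_of_mem_budgetSet hxS i).lt_of_ne hx_budget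
  have hiA : i ∈ A := not_imp_comm.1 (hxS.2.1 i) hx_zero
  have hsingle : Pi.single i b = x :=
    hx.2 (single_mem_budgetSet hiA (hpos.trans hxb).le) (smul_update_zero_mem_budgetSet hxS hxb)
      (mem_openSegment_single_smul_update_zero hpos hxb)
  exact hx_budget (by rw [← hsingle, Pi.single_eq_same])

end ExtremePoints

namespace NCGame

/-- The feasible strategies of player `v`: the ways of spending its budget on its incident edges,
an edge being identified with its other endpoint. -/
def strategySet (g : NCGame V) (v : V) : Set (V → ℝ) :=
  budgetSet {u | g.Adj v u} (g.B v)

variable {g : NCGame V} {s : V → V → ℝ} {v : V} {t : V → ℝ}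

theorem validState_iff_forall_mem_strategySet :
    validState g s ↔ ∀ v, s v ∈ g.strategySet v :=
  ⟨fun h v => ⟨h.1 v, h.2.1 v, h.2.2 v⟩,
    fun h => ⟨fun v => (h v).1, fun v => (h v).2.1, fun v => (h v).2.2⟩⟩

theorem validState_update (hs : validState g s) (ht : t ∈ g.strategySet v) :
    validState g (Function.update s v t) := by
  rw [validState_iff_forall_mem_strategySet] at hs ⊢
  exact (Function.forall_update_iff s fun w r => r ∈ g.strategySet w).2 ⟨ht, fun w _ => hs w⟩

open Classical in
theorem util_update_self (g : NCGame V) (s : V → V → ℝ) (v : V) (t : V → ℝ) :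
    util g (Function.update s v t) v =
      ∑ u, if g.Adj v u then g.f v u (t u) (s u v) else 0 := by
  refine Finset.sum_congr rfl fun u _ => if_ctx_congr Iff.rfl (fun hvu => ?_) fun _ => rfl
  have huv : u ≠ v := fun h => g.adj_irrefl v (h ▸ hvu)
  rw [Function.update_self, Function.update_of_ne huv]

theorem convexOn_util_update
    (hconv : ∀ u, g.Adj v u → ConvexOn ℝ (Set.Ici 0) fun x => g.f v u x (s u v)) :
    ConvexOn ℝ (g.strategySet v) fun t => util g (Function.update s v t) v := by
  classical
  simp only [util_update_self]
  have hS : Convex ℝ (g.strategySet v) := convex_budgetSet _ _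
  refine convexOn_finset_sum hS fun u _ => ?_
  by_cases hvu : g.Adj v u
  · simp only [if_pos hvu]
    exact ((hconv u hvu).comp_linearMap (LinearMap.proj u)).subset (fun t ht => ht.1 u) hS
  · simpa only [if_neg hvu] using convexOn_const 0 hS

theorem mem_extremePoints_strategySet_of_strict_best_response (hs : validState g s)
    (hconv : ∀ u, g.Adj v u → ConvexOn ℝ (Set.Ici 0) fun x => g.f v u x (s u v))
    (hstrict : ∀ t : V → ℝ, validState g (Function.update s v t) → t ≠ s v →
      util g (Function.update s v t) v < util g s v) :
    s v ∈ (g.strategySet v).extremePoints ℝ := by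
  refine mem_extremePoints_of_convexOn_of_forall_lt (convexOn_util_update hconv)
    (validState_iff_forall_mem_strategySet.1 hs v) fun t ht htne => ?_
  simpa only [Function.update_eq_self] using hstrict t (validState_update hs ht) htne

end NCGame

theorem classC_strict_pairwise_eq_tight_general (g : NCGame V)
    (hconv : ∀ u v, g.Adj u v → ∀ y, 0 ≤ y → ConvexOn ℝ (Set.Ici 0) fun x => g.f u v x y)
    (s : V → V → ℝ) (hs : validState g s)
    (hstrict : ∀ v (t : V → ℝ), validState g (Function.update s v t) →
      t ≠ s v → util g (Function.update s v t) v < util g s v) :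
    tightState g s := by
  intro u v _
  have hextreme : s u ∈ (g.strategySet u).extremePoints ℝ :=
    NCGame.mem_extremePoints_strategySet_of_strict_best_response hs
      (fun w huw => hconv u w huw (s w u) (hs.1 w u)) (hstrict u)
  exact eq_zero_or_eq_of_mem_extremePoints_budgetSet hextreme v

/-- with class-`C` rewards, every strict pairwise equilibrium
(each player's strategy is its unique unilateral best response) is tight. -/
theorem classC_strict_pairwise_eq_tight (g : NCGame V)
    (hC : ∀ u v, g.Adj u v → InClassC (g.f u v))
    (s : V → V → ℝ) (hs : IsPairwiseEq g s)
    (hstrict : ∀ v (t : V → ℝ), validState g (Function.update s v t) →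
      t ≠ s v → util g (Function.update s v t) v < util g s v) :
    tightState g s :=
  classC_strict_pairwise_eq_tight_general g (fun u v huv => (hC u v huv).2.2.2) s hs.1.1 hstrict
end

section
/- Consider a network contribution game in which every reward function f_e : ℝ≥0 × ℝ≥0 → ℝ≥0 is concave (as a function of the pair (x,y)). Then every pairwise equilibrium s satisfies w(s*) ≤ 2·w(s) for every state s*; i.e., the price of anarchy for pairwise equilibria is at most 2. -/
open Finset

variable {V : Type} [Fintype V] [DecidableEq V]

/-!
Compare a stable state `s` with a competing state `r`. For an edge `vu`, let player `v` raise its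
effort on `vu` to the level prescribed by `r` (if that is higher) and pay for it by moving all its
other efforts that exceed those of `r` a fraction `λ v u` of the way down to `r`, where `λ v u` is
the share of `vu` in the total increase of `v` from `s` to `r`. By concavity `v` then loses at most
`λ v u * L v` on its other edges, `L v` being the loss from going all the way down. If both
endpoints of `vu` deviate like this, one of them does not gain, so the reward of `vu` at `s ⊔ r` is
at most its reward at `s` plus `λ v u * L v + λ u v * L u`. Since `∑ u, λ v u ≤ 1`, summing over
all edges charges each `L v` at most once, and monotonicity absorbs this into a second copy of the
welfare of `s`.
-/

theorem concaveOn_fst_of_concaveOn_prod {𝕜 E F β : Type*} [Semiring 𝕜] [PartialOrder 𝕜]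
    [AddCommMonoid E] [AddCommMonoid F] [AddCommMonoid β] [PartialOrder β] [Module 𝕜 E]
    [Module 𝕜 F] [SMul 𝕜 β] {A : Set E} {C : Set F} {f : E × F → β}
    (hf : ConcaveOn 𝕜 (A ×ˢ C) f) {y : F} (hy : y ∈ C) :
    ConcaveOn 𝕜 A (fun x => f (x, y)) := by
  refine ⟨fun x hx x' hx' a b ha hb hab => ?_, fun x hx x' hx' a b ha hb hab => ?_⟩
  · exact (hf.1 (x := (x, y)) ⟨hx, hy⟩ (y := (x', y)) ⟨hx', hy⟩ ha hb hab).1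
  · simpa [← add_smul, hab] using
      hf.2 (x := (x, y)) ⟨hx, hy⟩ (y := (x', y)) ⟨hx', hy⟩ ha hb hab

section ShiftToward

variable {ι K : Type*} [Fintype ι] [Field K] [LinearOrder K]

/-- The share of coordinate `i` in the total increase from `x` to `y`; it is `0` for every `i` when
no coordinate increases. -/
def shiftWeight (x y : ι → K) (i : ι) : K :=
  (y i - x i)⁺ / ∑ j, (y j - x j)⁺

/-- The vector obtained from `x` by performing the whole increase towards `y` in coordinate `i`,
together with the fraction `shiftWeight x y i` of every decrease towards `y`. -/
def shiftToward [DecidableEq ι] (x y : ι → K) (i : ι) : ι → K := fun j =>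
  (1 - shiftWeight x y i) * x j + shiftWeight x y i * (x j ⊓ y j) +
    if j = i then (y i - x i)⁺ else 0

theorem shiftToward_of_ne [DecidableEq ι] (x y : ι → K) {i j : ι} (hj : j ≠ i) :
    shiftToward x y i j =
      (1 - shiftWeight x y i) * x j + shiftWeight x y i * (x j ⊓ y j) := by
  simp [shiftToward, hj]

variable [IsStrictOrderedRing K] (x y : ι → K) (i : ι)

theorem shiftWeight_nonneg : 0 ≤ shiftWeight x y i :=
  div_nonneg (posPart_nonneg _) (sum_nonneg fun _ _ => posPart_nonneg _)

theorem sum_shiftWeight_le_one : ∑ i, shiftWeight x y i ≤ 1 := by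
  simp only [shiftWeight, ← sum_div]
  exact div_self_le_one _

theorem shiftWeight_le_one : shiftWeight x y i ≤ 1 :=
  (single_le_sum (fun j _ => shiftWeight_nonneg x y j) (mem_univ i)).trans
    (sum_shiftWeight_le_one x y)

theorem shiftWeight_mul_sum_posPart :
    shiftWeight x y i * ∑ j, (y j - x j)⁺ = (y i - x i)⁺ :=
  div_mul_cancel_of_imp fun hsum =>
    (sum_eq_zero_iff_of_nonneg fun _ _ => posPart_nonneg _).1 hsum i (mem_univ i)

variable [DecidableEq ι]

theorem shiftToward_self : shiftToward x y i i = x i ⊔ y i := by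
  rcases le_total (x i) (y i) with h | h
  · simp [shiftToward, h, ← add_mul]
  · simp [shiftToward, shiftWeight, h]

theorem sum_shiftToward :
    ∑ j, shiftToward x y i j =
      (1 - shiftWeight x y i) * ∑ j, x j + shiftWeight x y i * ∑ j, y j := by
  have inf_eq (j : ι) : x j ⊓ y j = y j - (y j - x j)⁺ := by
    rw [inf_comm, inf_eq_sub_posPart_sub]
  simp only [shiftToward, sum_add_distrib, ← mul_sum, sum_ite_eq', mem_univ, if_true, inf_eq,
    sum_sub_distrib, mul_sub, shiftWeight_mul_sum_posPart]
  ring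

variable {x y}

theorem shiftToward_nonneg (hx : 0 ≤ x) (hy : 0 ≤ y) : 0 ≤ shiftToward x y i := fun j => by
  have hweight := sub_nonneg.2 (shiftWeight_le_one x y i)
  have hinc : 0 ≤ if j = i then (y i - x i)⁺ else 0 := by split_ifs <;> positivity
  exact add_nonneg (add_nonneg (mul_nonneg hweight (hx j))
    (mul_nonneg (shiftWeight_nonneg x y i) (le_inf (hx j) (hy j)))) hinc

theorem shiftToward_eq_zero {j : ι} (hx : x j = 0) (hy : y j = 0) :
    shiftToward x y i j = 0 := by
  rcases eq_or_ne j i with rfl | hj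
  · simp [shiftToward_self, hx, hy]
  · simp [shiftToward_of_ne x y hj, hx, hy]

theorem sum_shiftToward_le {b : K} (hx : ∑ j, x j ≤ b) (hy : ∑ j, y j ≤ b) :
    ∑ j, shiftToward x y i j ≤ b := by
  rw [sum_shiftToward]
  exact convex_Iic b hx hy (sub_nonneg.2 (shiftWeight_le_one x y i)) (shiftWeight_nonneg x y i)
    (sub_add_cancel _ _)

end ShiftToward

namespace NCGame

open Classical in
/-- The reward of the pair `(v, u)` when `v` contributes `x` and `u` contributes `y`: that of the
edge `vu`, extended by `0` to pairs that are not edges. -/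
noncomputable def edgeReward (g : NCGame V) (v u : V) (x y : ℝ) : ℝ :=
  if g.Adj v u then g.f v u x y else 0

/-- Separate concavity of the rewards: every reward is concave in each player's effort when the
other effort is held fixed. By symmetry of the rewards it suffices to ask this for the first
argument. -/
def IsSeparatelyConcave (g : NCGame V) : Prop :=
  ∀ u v, g.Adj u v → ∀ y, 0 ≤ y → ConcaveOn ℝ (Set.Ici 0) (fun x => g.f u v x y)

variable (g : NCGame V) (v u : V)

theorem edgeReward_self (x y : ℝ) : g.edgeReward v v x y = 0 :=
  if_neg (g.adj_irrefl v)

theorem edgeReward_swap (x y : ℝ) : g.edgeReward v u x y = g.edgeReward u v y x := by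
  classical
  have hadj : g.Adj v u ↔ g.Adj u v := ⟨g.adj_symm v u, g.adj_symm u v⟩
  exact if_congr hadj ((g.f_comm v u x y).trans (g.f_symm u v x y)) rfl

variable {x x' y y' : ℝ}

theorem edgeReward_nonneg (hx : 0 ≤ x) (hy : 0 ≤ y) : 0 ≤ g.edgeReward v u x y := by
  unfold edgeReward
  split_ifs
  exacts [g.f_nonneg v u x y hx hy, le_rfl]

theorem edgeReward_mono_left (hx : 0 ≤ x) (hy : 0 ≤ y) (hxx' : x ≤ x') :
    g.edgeReward v u x y ≤ g.edgeReward v u x' y := by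
  unfold edgeReward
  split_ifs
  exacts [g.f_mono v u y hy hx (hx.trans hxx') hxx', le_rfl]

theorem edgeReward_mono (hx : 0 ≤ x) (hy : 0 ≤ y) (hxx' : x ≤ x') (hyy' : y ≤ y') :
    g.edgeReward v u x y ≤ g.edgeReward v u x' y' := by
  calc g.edgeReward v u x y
      ≤ g.edgeReward v u x' y := g.edgeReward_mono_left v u hx hy hxx'
    _ = g.edgeReward u v y x' := g.edgeReward_swap v u x' y
    _ ≤ g.edgeReward u v y' x' := g.edgeReward_mono_left u v hy (hx.trans hxx') hyy'
    _ = g.edgeReward v u x' y' := g.edgeReward_swap u v y' x'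

variable {g} in
theorem IsSeparatelyConcave.concaveOn_edgeReward (hg : g.IsSeparatelyConcave) (hy : 0 ≤ y) :
    ConcaveOn ℝ (Set.Ici 0) (fun x => g.edgeReward v u x y) := by
  by_cases hadj : g.Adj v u
  · simpa only [edgeReward, if_pos hadj] using hg v u hadj y hy
  · simpa only [edgeReward, if_neg hadj] using concaveOn_const 0 (convex_Ici 0)

theorem edgeReward_add_le_sup_add_inf (hx : 0 ≤ x) (hx' : 0 ≤ x') (hy : 0 ≤ y) (hy' : 0 ≤ y') :
    g.edgeReward v u y y' + g.edgeReward v u x x' ≤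
      g.edgeReward v u (x ⊔ y) (x' ⊔ y') + g.edgeReward v u (x ⊓ y) x' +
        g.edgeReward v u x (x' ⊓ y') := by
  have hsup : g.edgeReward v u y y' ≤ g.edgeReward v u (x ⊔ y) (x' ⊔ y') :=
    g.edgeReward_mono v u hy hy' le_sup_right le_sup_right
  have hinf_left := g.edgeReward_nonneg v u (le_inf hx hy) hx'
  have hinf_right := g.edgeReward_nonneg v u hx (le_inf hx' hy')
  rcases le_total x y with hxy | hyx
  · rw [inf_eq_left.2 hxy]
    linarith
  rcases le_total x' y' with hxy' | hyx'
  · rw [inf_eq_left.2 hxy']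
    linarith
  · have hle : g.edgeReward v u y y' ≤ g.edgeReward v u y x' :=
      g.edgeReward_mono v u hy hy' le_rfl hyx'
    rw [inf_eq_right.2 hyx, sup_eq_left.2 hyx, sup_eq_left.2 hyx']
    linarith

end NCGame

section Deviation

variable (g : NCGame V) {s r : V → V → ℝ}

theorem util_eq_sum_edgeReward (s : V → V → ℝ) (v : V) :
    util g s v = ∑ u, g.edgeReward v u (s v u) (s u v) := rfl

/-- The part of the reward of `vu` that is lost when, starting from the state `s`, player `v` alone
lowers its effort on `vu` to the one in `r`; it is `0` if that effort is not lower. -/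
noncomputable def edgeLoss (s r : V → V → ℝ) (v u : V) : ℝ :=
  g.edgeReward v u (s v u) (s u v) - g.edgeReward v u (s v u ⊓ r v u) (s u v)

/-- What `v` would lose by lowering all its efforts in `s` that exceed those in `r`, scaled by the
weight of the shift towards `r` along `vu`. It bounds the cost for `v` of that shift. -/
noncomputable def shiftCost (s r : V → V → ℝ) (v u : V) : ℝ :=
  shiftWeight (s v) (r v) u * ∑ d, edgeLoss g s r v d

/-- The state obtained from `s` when both endpoints of the edge `vu` shift their efforts towards
`r` along that edge. -/
noncomputable def pairShift (s r : V → V → ℝ) (v u : V) : V → V → ℝ :=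
  Function.update (Function.update s v (shiftToward (s v) (r v) u)) u (shiftToward (s u) (r u) v)

/-- Bilateral stability: no two players have a joint deviation that is strictly profitable for
both. This is the condition that a pairwise equilibrium satisfies beyond being Nash. -/
def IsBilaterallyStable (s : V → V → ℝ) : Prop :=
  ∀ u v (tu tv : V → ℝ), u ≠ v →
    validState g (Function.update (Function.update s u tu) v tv) →
    ¬(util g s u < util g (Function.update (Function.update s u tu) v tv) u ∧
      util g s v < util g (Function.update (Function.update s u tu) v tv) v)

theorem pairShift_comm {v u : V} (hvu : v ≠ u) : pairShift s r v u = pairShift s r u v :=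
  Function.update_comm hvu _ _ s

theorem pairShift_left {v u : V} (hvu : v ≠ u) :
    pairShift s r v u v = shiftToward (s v) (r v) u := by
  simp [pairShift, hvu]

theorem pairShift_right (v u : V) : pairShift s r v u u = shiftToward (s u) (r u) v := by
  simp [pairShift]

theorem pairShift_of_ne {v u d : V} (hdv : d ≠ v) (hdu : d ≠ u) :
    pairShift s r v u d = s d := by
  simp [pairShift, hdv, hdu]

variable {g}

theorem edgeLoss_nonneg (hs : validState g s) (hr : validState g r) (v u : V) :
    0 ≤ edgeLoss g s r v u :=
  sub_nonneg.2 (g.edgeReward_mono_left v u (le_inf (hs.1 v u) (hr.1 v u)) (hs.1 u v) inf_le_left)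

theorem shiftCost_nonneg (hs : validState g s) (hr : validState g r) (v u : V) :
    0 ≤ shiftCost g s r v u :=
  mul_nonneg (shiftWeight_nonneg _ _ u) (sum_nonneg fun d _ => edgeLoss_nonneg hs hr v d)

theorem sum_shiftCost_le (hs : validState g s) (hr : validState g r) (v : V) :
    ∑ u, shiftCost g s r v u ≤ ∑ u, edgeLoss g s r v u := by
  simp only [shiftCost, ← sum_mul]
  exact mul_le_of_le_one_left (sum_nonneg fun d _ => edgeLoss_nonneg hs hr v d)
    (sum_shiftWeight_le_one _ _)

theorem validState_update (hs : validState g s) {v : V} {t : V → ℝ} (ht_nonneg : 0 ≤ t)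
    (ht_supp : ∀ u, ¬ g.Adj v u → t u = 0) (ht_sum : ∑ u, t u ≤ g.B v) :
    validState g (Function.update s v t) := by
  refine ⟨fun w => ?_, fun w => ?_, fun w => ?_⟩ <;> rcases eq_or_ne w v with rfl | hw
  · simpa using fun u => ht_nonneg u
  · simpa [hw] using hs.1 w
  · simpa using ht_supp
  · simpa [hw] using hs.2.1 w
  · simpa using ht_sum
  · simpa [hw] using hs.2.2 w

theorem validState_update_shiftToward {q : V → V → ℝ} (hq : validState g q)
    (hs : validState g s) (hr : validState g r) (v u : V) :
    validState g (Function.update q v (shiftToward (s v) (r v) u)) :=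
  validState_update hq (shiftToward_nonneg u (hs.1 v) (hr.1 v))
    (fun d hd => shiftToward_eq_zero u (hs.2.1 v d hd) (hr.2.1 v d hd))
    (sum_shiftToward_le u (hs.2.2 v) (hr.2.2 v))

theorem validState_pairShift (hs : validState g s) (hr : validState g r) (v u : V) :
    validState g (pairShift s r v u) :=
  validState_update_shiftToward (validState_update_shiftToward hs hs hr v u) hs hr u v

theorem edgeReward_le_shiftToward_add_loss (hg : g.IsSeparatelyConcave) (hs : validState g s)
    (hr : validState g r) (v : V) {u d : V} (hdu : d ≠ u) :
    g.edgeReward v d (s v d) (s d v) ≤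
      g.edgeReward v d (shiftToward (s v) (r v) u d) (s d v) +
        shiftWeight (s v) (r v) u * edgeLoss g s r v d := by
  have hconc := (hg.concaveOn_edgeReward v d (hs.1 d v)).2 (hs.1 v d)
    (le_inf (hs.1 v d) (hr.1 v d)) (sub_nonneg.2 (shiftWeight_le_one (s v) (r v) u))
    (shiftWeight_nonneg (s v) (r v) u) (sub_add_cancel _ _)
  simp only [smul_eq_mul] at hconc
  rw [shiftToward_of_ne _ _ hdu, edgeLoss]
  linarith

theorem util_add_edgeReward_sup_le (hg : g.IsSeparatelyConcave) (hs : validState g s)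
    (hr : validState g r) {v u : V} (hvu : v ≠ u) :
    util g s v + g.edgeReward v u (s v u ⊔ r v u) (s u v ⊔ r u v) ≤
      util g (pairShift s r v u) v + g.edgeReward v u (s v u) (s u v) + shiftCost g s r v u := by
  set q := pairShift s r v u with hq
  have hself : g.edgeReward v u (q v u) (q u v) =
      g.edgeReward v u (s v u ⊔ r v u) (s u v ⊔ r u v) := by
    rw [hq, pairShift_left hvu, pairShift_right, shiftToward_self, shiftToward_self]
  have hother : ∀ d ∈ univ.erase u, g.edgeReward v d (s v d) (s d v) ≤
      g.edgeReward v d (q v d) (q d v) + shiftWeight (s v) (r v) u * edgeLoss g s r v d := by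
    intro d hd
    have hdu := ne_of_mem_erase hd
    rcases eq_or_ne d v with rfl | hdv
    · simp [edgeLoss, g.edgeReward_self]
    · rw [hq, pairShift_left hvu, pairShift_of_ne hdv hdu]
      exact edgeReward_le_shiftToward_add_loss hg hs hr v hdu
  have hsum := sum_le_sum hother
  have hloss : ∑ d ∈ univ.erase u, edgeLoss g s r v d ≤ ∑ d, edgeLoss g s r v d :=
    sum_le_univ_sum_of_nonneg (edgeLoss_nonneg hs hr v)
  have hcost := mul_le_mul_of_nonneg_left hloss (shiftWeight_nonneg (s v) (r v) u)
  rw [sum_add_distrib, ← mul_sum] at hsum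
  rw [util_eq_sum_edgeReward, util_eq_sum_edgeReward, ← add_sum_erase _ _ (mem_univ u),
    ← add_sum_erase _ (fun d => g.edgeReward v d (q v d) (q d v)) (mem_univ u), hself, shiftCost]
  linarith

end Deviation

section PriceOfAnarchy

variable {g : NCGame V} {s r : V → V → ℝ}

theorem edgeReward_sup_le_of_isBilaterallyStable (hg : g.IsSeparatelyConcave)
    (hs : validState g s) (hstable : IsBilaterallyStable g s) (hr : validState g r) (v u : V) :
    g.edgeReward v u (s v u ⊔ r v u) (s u v ⊔ r u v) ≤
      g.edgeReward v u (s v u) (s u v) + shiftCost g s r v u + shiftCost g s r u v := by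
  have hcost_v := shiftCost_nonneg hs hr v u
  have hcost_u := shiftCost_nonneg hs hr u v
  rcases eq_or_ne v u with rfl | hvu
  · simp only [g.edgeReward_self]
    linarith
  have hgain_v := util_add_edgeReward_sup_le hg hs hr hvu
  have hgain_u := util_add_edgeReward_sup_le hg hs hr hvu.symm
  rw [← pairShift_comm hvu, g.edgeReward_swap u v, g.edgeReward_swap u v] at hgain_u
  have hno_gain : util g (pairShift s r v u) v ≤ util g s v ∨
      util g (pairShift s r v u) u ≤ util g s u :=
    (not_and_or.1 (hstable v u _ _ hvu (validState_pairShift hs hr v u))).imp not_lt.1 not_lt.1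
  rcases hno_gain with h | h <;> linarith

theorem edgeReward_add_edgeLoss_le (hg : g.IsSeparatelyConcave)
    (hs : validState g s) (hstable : IsBilaterallyStable g s) (hr : validState g r) (v u : V) :
    g.edgeReward v u (r v u) (r u v) + (edgeLoss g s r v u + edgeLoss g s r u v) ≤
      2 * g.edgeReward v u (s v u) (s u v) + (shiftCost g s r v u + shiftCost g s r u v) := by
  have hsup := edgeReward_sup_le_of_isBilaterallyStable hg hs hstable hr v u
  have hmono :=
    g.edgeReward_add_le_sup_add_inf v u (hs.1 v u) (hs.1 u v) (hr.1 v u) (hr.1 u v)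
  simp only [edgeLoss, g.edgeReward_swap u v]
  linarith

theorem poa_concave_le_two_general (hg : g.IsSeparatelyConcave)
    (hs : validState g s) (hstable : IsBilaterallyStable g s) (hr : validState g r) :
    welfare g r ≤ 2 * welfare g s := by
  have hedges := sum_le_sum fun v (_ : v ∈ univ) => sum_le_sum fun u (_ : u ∈ univ) =>
    edgeReward_add_edgeLoss_le hg hs hstable hr v u
  have hcost : ∑ v, ∑ u, shiftCost g s r v u ≤ ∑ v, ∑ u, edgeLoss g s r v u :=
    sum_le_sum fun v _ => sum_shiftCost_le hs hr v
  have hloss_comm : ∑ v, ∑ u, edgeLoss g s r u v = ∑ v, ∑ u, edgeLoss g s r v u := sum_comm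
  have hcost_comm : ∑ v, ∑ u, shiftCost g s r u v = ∑ v, ∑ u, shiftCost g s r v u := sum_comm
  simp only [sum_add_distrib, ← mul_sum] at hedges
  simp only [welfare, util_eq_sum_edgeReward]
  linarith

end PriceOfAnarchy

/-- with concave rewards (jointly concave on the nonnegative
quadrant), the price of anarchy for pairwise equilibria is at most 2. -/
theorem poa_concave_le_two (g : NCGame V)
    (hconc : ∀ u v, g.Adj u v →
      ConcaveOn ℝ (Set.Ici 0 ×ˢ Set.Ici 0) (fun q : ℝ × ℝ => g.f u v q.1 q.2))
    (s : V → V → ℝ) (hs : IsPairwiseEq g s)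
    (sStar : V → V → ℝ) (hStar : validState g sStar) :
    welfare g sStar ≤ 2 * welfare g s := by
  exact poa_concave_le_two_general
    (fun u v hadj _ hy => concaveOn_fst_of_concaveOn_prod (hconc u v hadj) hy) hs.1.1 hs.2 hStar
end
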